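/- arXiv:1208.1981 — 5 statements merged into one kernel-verified Lean document; each statement's English description precedes it below -/
import Mathlib

section
/- (Theorem 1(i), postulate FD4.) Suppose D^d is monotone on rays: whenever a point w ∈ ℝ^d satisfies D^d(w | Y) ≥ D^d(v | Y) for all v ∈ ℝ^d (w is a deepest point of the cloud Y), then for every direction r ∈ ℝ^d the map α ↦ D^d(w + α r | Y) is nonincreasing on (0, ∞). Let z* ∈ E be such that D^d(φ(z*) | φ(X)) = 1 for every φ ∈ Φ (so, since D^d ≤ 1, each φ(z*) is a deepest point of the cloud φ(X), and D(z* | X) = 1). Then for every r ∈ E the map α ↦ D(z* + α r | X) is nonincreasing on (0, ∞). -/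
/-!
A linear map `φ` sends the ray `z + α • r` to the ray `φ z + α • φ r`. If `φ z` is a deepest point
of the projected cloud, then the depth of the projection is nonincreasing along that ray, and a
pointwise greatest lower bound of nonincreasing functions is nonincreasing.
-/

theorem antitoneOn_of_isGLB_image {κ α L : Type*} [Preorder α] [Preorder L]
    {f : κ → α → L} {g : α → L} {s : Set α} {K : Set κ}
    (hg : ∀ a ∈ s, IsGLB ((fun k => f k a) '' K) (g a))
    (hf : ∀ k ∈ K, AntitoneOn (f k) s) :
    AntitoneOn g s := by
  intro a ha b hb hab
  refine (le_isGLB_iff (hg a ha)).2 (Set.forall_mem_image.2 fun k hk => ?_)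
  calc
    g b ≤ f k b := (hg b hb).1 (Set.mem_image_of_mem _ hk)
    _ ≤ f k a := hf k hk ha hb hab

/-- `w` is a deepest point of the data cloud `Y` for the depth `Dd`. -/
def IsDeepest {ι F L : Type*} [LE L] (Dd : F → (ι → F) → L) (Y : ι → F) (w : F) : Prop :=
  ∀ v, Dd v Y ≤ Dd w Y

/-- The depth `Dd` is monotone on rays: it is nonincreasing along every open ray that starts at a
deepest point. Rays are parametrized by the positive elements of the scalars `R`. -/
def IsRayMonotone (R : Type*) {ι F L : Type*} [Semiring R] [Preorder R] [AddCommMonoid F]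
    [Module R F] [Preorder L] (Dd : F → (ι → F) → L) : Prop :=
  ∀ (Y : ι → F) (w : F), IsDeepest Dd Y w →
    ∀ r : F, AntitoneOn (fun α : R => Dd (w + α • r) Y) (Set.Ioi 0)

/-- `D` is the Φ-depth with respect to the data cloud `X`. The infimum over `Φ` is encoded as a
greatest lower bound, so that it is a genuine one even where `sInf` would take a junk value. -/
def IsPhiDepth {𝓕 ι E F L : Type*} [FunLike 𝓕 E F] [Preorder L] (Dd : F → (ι → F) → L)
    (Φ : Set 𝓕) (X : ι → E) (D : E → L) : Prop :=
  ∀ z, IsGLB ((fun φ : 𝓕 => Dd (φ z) (φ ∘ X)) '' Φ) (D z)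

theorem isPhiDepth_of_eq_sInf {𝓕 ι E F L : Type*} [FunLike 𝓕 E F]
    [ConditionallyCompleteLattice L] {Dd : F → (ι → F) → L} {Φ : Set 𝓕} {X : ι → E} {D : E → L}
    {b : L} (hb : ∀ y Y, b ≤ Dd y Y) (hΦ : Φ.Nonempty)
    (hD : ∀ z, D z = sInf {v | ∃ φ ∈ Φ, v = Dd (φ z) (φ ∘ X)}) :
    IsPhiDepth Dd Φ X D := by
  intro z
  have image_eq : (fun φ : 𝓕 => Dd (φ z) (φ ∘ X)) '' Φ =
      {v | ∃ φ ∈ Φ, v = Dd (φ z) (φ ∘ X)} := by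
    simp only [Set.image, eq_comm]
  rw [hD z, ← image_eq]
  exact isGLB_csInf (hΦ.image _) ⟨b, Set.forall_mem_image.2 fun _ _ => hb _ _⟩

section LinearMaps

variable {R 𝓕 ι E F L : Type*} [Semiring R] [Preorder R] [AddCommMonoid E] [Module R E]
  [AddCommMonoid F] [Module R F] [FunLike 𝓕 E F] [LinearMapClass 𝓕 R E F] [Preorder L]
  {Dd : F → (ι → F) → L} {X : ι → E} {z : E}

theorem IsRayMonotone.antitoneOn_map (hDd : IsRayMonotone R Dd) (φ : 𝓕)
    (hz : IsDeepest Dd (φ ∘ X) (φ z)) (r : E) :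
    AntitoneOn (fun α : R => Dd (φ (z + α • r)) (φ ∘ X)) (Set.Ioi 0) := by
  simpa only [map_add, map_smul] using hDd (φ ∘ X) (φ z) hz (φ r)

theorem phi_depth_FD4_general {Φ : Set 𝓕} {D : E → L} (hD : IsPhiDepth Dd Φ X D)
    (hDd : IsRayMonotone R Dd) (hz : ∀ φ ∈ Φ, IsDeepest Dd (φ ∘ X) (φ z)) (r : E) :
    AntitoneOn (fun α : R => D (z + α • r)) (Set.Ioi 0) :=
  antitoneOn_of_isGLB_image (fun α _ => hD (z + α • r))
    fun φ hφ => hDd.antitoneOn_map φ (hz φ hφ) r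

end LinearMaps

/-- Theorem 1(i), postulate FD4: if the d-variate depth is monotone on rays,
then the Φ-depth is monotone on rays from a point of maximal depth. -/
theorem phi_depth_FD4
    {E : Type*} [NormedAddCommGroup E] [NormedSpace ℝ E]
    {n d : ℕ} (hn : 0 < n) (hd : 0 < d)
    (Dd : (Fin d → ℝ) → (Fin n → (Fin d → ℝ)) → ℝ)
    (hDd01 : ∀ y Y, Dd y Y ∈ Set.Icc (0 : ℝ) 1)
    (Φ : Set (E →L[ℝ] (Fin d → ℝ))) (hΦ : Φ.Nonempty)
    (D : E → (Fin n → E) → ℝ)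
    (hD : ∀ z X, D z X = sInf {v : ℝ | ∃ φ ∈ Φ, v = Dd (φ z) (fun i => φ (X i))})
    (hray : ∀ (Y : Fin n → (Fin d → ℝ)) (w : Fin d → ℝ),
      (∀ v, Dd v Y ≤ Dd w Y) →
      ∀ r : Fin d → ℝ, AntitoneOn (fun α : ℝ => Dd (w + α • r) Y) (Set.Ioi 0))
    (X : Fin n → E) (zstar : E)
    (hzstar : ∀ φ ∈ Φ, Dd (φ zstar) (fun i => φ (X i)) = 1)
    (r : E) :
    AntitoneOn (fun α : ℝ => D (zstar + α • r) X) (Set.Ioi 0) :=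
  phi_depth_FD4_general (isPhiDepth_of_eq_sInf (fun y Y => (hDd01 y Y).1) hΦ (hD · X)) hray
    (fun φ hφ v => (hDd01 v _).2.trans_eq (hzstar φ hφ).symm) r
end

section
/- (Theorem 1(ii), sufficiency for postulate FD3.) Suppose D^d is null at infinity: for every cloud Y in ℝ^d and every sequence (y_i) in ℝ^d with ‖y_i‖ → ∞ one has D^d(y_i | Y) → 0. Suppose moreover that for every sequence (z_i) in E with ‖z_i‖ → ∞ there exists φ ∈ Φ such that ‖φ(z_i)‖ → ∞. Then the Φ-depth is null at infinity: for every sequence (z_i) in E with ‖z_i‖ → ∞ one has D(z_i | X) → 0. -/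
open Filter

section CsInf

variable {α β γ : Type*} [ConditionallyCompleteLattice α] [TopologicalSpace α]
  [OrderTopology α]

theorem tendsto_csInf_image_of_forall_le {s : Set γ} {f : γ → β → α} {a : α} {l : Filter β}
    (hle : ∀ c ∈ s, ∀ b, a ≤ f c b) {c : γ} (hc : c ∈ s) (hlim : Tendsto (f c) l (nhds a)) :
    Tendsto (fun b => sInf ((fun c => f c b) '' s)) l (nhds a) := by
  have hlower (b : β) : a ∈ lowerBounds ((fun c => f c b) '' s) :=
    Set.forall_mem_image.2 fun c hc => hle c hc b
  refine tendsto_of_tendsto_of_tendsto_of_le_of_le tendsto_const_nhds hlim ?_ ?_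
  · exact fun b => le_csInf ⟨f c b, Set.mem_image_of_mem _ hc⟩ (hlower b)
  · exact fun b => csInf_le ⟨a, hlower b⟩ (Set.mem_image_of_mem _ hc)

end CsInf

section PhiDepth

variable {ι E F 𝓕 : Type*} [FunLike 𝓕 E F]

/-- A depth, as a function of a point and a cloud indexed by `ι`, is null at infinity if, for each
fixed cloud, it tends to zero along every sequence of points whose norms tend to infinity. -/
def DepthNullAtInfinity [Norm E] (D : E → (ι → E) → ℝ) : Prop :=
  ∀ (X : ι → E) (z : ℕ → E), Tendsto (fun i => ‖z i‖) atTop atTop →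
    Tendsto (fun i => D (z i) X) atTop (nhds 0)

/-- The `Φ`-depth of `z` with respect to the cloud `X`: the infimum over `φ ∈ Φ` of the depth of
`φ z` with respect to the image cloud. The infimum is taken in `ℝ`, so it has the junk value `0`
when `Φ` is empty or the depths are unbounded below. -/
noncomputable def phiDepth (Dd : F → (ι → F) → ℝ) (Φ : Set 𝓕) (z : E) (X : ι → E) : ℝ :=
  sInf ((fun φ : 𝓕 => Dd (φ z) (fun i => φ (X i))) '' Φ)

theorem phi_depth_FD3_general [Norm E] [Norm F] {Dd : F → (ι → F) → ℝ} {Φ : Set 𝓕}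
    (hnonneg : ∀ y Y, 0 ≤ Dd y Y) (hnull : DepthNullAtInfinity Dd)
    (hdiv : ∀ z : ℕ → E, Tendsto (fun i => ‖z i‖) atTop atTop →
      ∃ φ ∈ Φ, Tendsto (fun i => ‖φ (z i)‖) atTop atTop) :
    DepthNullAtInfinity (phiDepth Dd Φ : E → (ι → E) → ℝ) := by
  intro X z hz
  obtain ⟨φ, hφ, hφz⟩ := hdiv z hz
  exact tendsto_csInf_image_of_forall_le (fun _ _ _ => hnonneg _ _) hφ (hnull _ _ hφz)

end PhiDepth

/-- Theorem 1(ii), sufficiency for postulate FD3: if the d-variate depth is null at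
infinity and every sequence diverging in norm diverges under some φ ∈ Φ, then the
Φ-depth is null at infinity. -/
theorem phi_depth_FD3
    {E : Type*} [NormedAddCommGroup E] [NormedSpace ℝ E]
    {n d : ℕ} (hn : 0 < n) (hd : 0 < d)
    (Dd : (Fin d → ℝ) → (Fin n → (Fin d → ℝ)) → ℝ)
    (hDd01 : ∀ y Y, Dd y Y ∈ Set.Icc (0 : ℝ) 1)
    (Φ : Set (E →L[ℝ] (Fin d → ℝ))) (hΦ : Φ.Nonempty)
    (D : E → (Fin n → E) → ℝ)
    (hD : ∀ z X, D z X = sInf {v : ℝ | ∃ φ ∈ Φ, v = Dd (φ z) (fun i => φ (X i))})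
    (hnull : ∀ (Y : Fin n → (Fin d → ℝ)) (y : ℕ → (Fin d → ℝ)),
      Tendsto (fun i => ‖y i‖) atTop atTop →
      Tendsto (fun i => Dd (y i) Y) atTop (nhds 0))
    (hΦdiv : ∀ zs : ℕ → E, Tendsto (fun i => ‖zs i‖) atTop atTop →
      ∃ φ ∈ Φ, Tendsto (fun i => ‖φ (zs i)‖) atTop atTop)
    (X : Fin n → E) (zs : ℕ → E)
    (hzs : Tendsto (fun i => ‖zs i‖) atTop atTop) :
    Tendsto (fun i => D (zs i) X) atTop (nhds 0) := by
  obtain rfl : D = phiDepth Dd Φ := by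
    funext z X
    simp only [hD, phiDepth, Set.image, eq_comm]
  exact phi_depth_FD3_general (fun y Y => (hDd01 y Y).1) hnull hΦdiv X zs hzs
end

section
/- (Proposition 1, postulate FD2F for the graph depth.) Suppose D^d is linear invariant: D^d(A y | A x¹, …, A xⁿ) = D^d(y | x¹, …, xⁿ) for every invertible linear map A : ℝ^d → ℝ^d and every cloud in ℝ^d. Let a : J → ℝ^d be a function with a_j(t) ≠ 0 for every coordinate j ∈ {1, …, d} and every t ∈ T, and let a·z denote the componentwise (pointwise) product, (a·z)(t) = (a_1(t)z_1(t), …, a_d(t)z_d(t)). Then the graph depth is function-scale invariant: GD(a·z | a·x¹, …, a·xⁿ) = GD(z | x¹, …, xⁿ). -/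
section

variable {J κ K E α : Type*}

/-- The set of depths of `z t` in the cloud `(x i t)ᵢ` as `t` ranges over `T`, whose infimum is the
graph depth. Working with the set avoids the junk value of `sInf` on sets without an infimum. -/
def pointwiseDepths (D : E → (κ → E) → α) (T : Set J) (z : J → E) (x : κ → J → E) : Set α :=
  {v | ∃ t ∈ T, v = D (z t) (fun i => x i t)}

theorem pointwiseDepths_congr {D : E → (κ → E) → α} {T : Set J} {z z' : J → E}
    {x x' : κ → J → E}
    (h : ∀ t ∈ T, D (z t) (fun i => x i t) = D (z' t) (fun i => x' i t)) :
    pointwiseDepths D T z x = pointwiseDepths D T z' x' :=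
  Set.ext fun v => exists_congr fun t => and_congr_right fun ht => by rw [h t ht]

variable [Semiring K] [AddCommMonoid E] [Module K E]

variable (K) in
/-- Linear invariance of a depth `D y Y` of a point `y` in a cloud `Y` indexed by `κ`, with values
in any type: applying the same linear automorphism to the point and to the cloud does not change
the depth. -/
def IsLinearInvariant (D : E → (κ → E) → α) : Prop :=
  ∀ (A : E ≃ₗ[K] E) (y : E) (Y : κ → E), D (A y) (fun i => A (Y i)) = D y Y

theorem IsLinearInvariant.apply_eq_of_isUnit {D : E → (κ → E) → α} (hD : IsLinearInvariant K D)
    {A : Module.End K E} (hA : IsUnit A) (y : E) (Y : κ → E) :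
    D (A y) (fun i => A (Y i)) = D y Y := by
  obtain ⟨u, rfl⟩ := hA
  exact hD (LinearMap.GeneralLinearGroup.toLinearEquiv u) y Y

theorem graph_depth_FD2F_general {D : E → (κ → E) → α} (hD : IsLinearInvariant K D) {T : Set J}
    {A : J → Module.End K E} (hA : ∀ t ∈ T, IsUnit (A t)) (z : J → E) (x : κ → J → E) :
    pointwiseDepths D T (fun t => A t (z t)) (fun i t => A t (x i t)) = pointwiseDepths D T z x :=
  pointwiseDepths_congr fun t ht => hD.apply_eq_of_isUnit (hA t ht) (z t) fun i => x i t

end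

/-- Proposition 1, postulate FD2F: the graph depth is function-scale invariant
whenever the underlying d-variate depth is linear invariant. -/
theorem graph_depth_FD2F
    {J : Type*} {n d : ℕ} (hn : 0 < n) (hd : 0 < d)
    (T : Set J) (hT : T.Nonempty)
    (Dd : (Fin d → ℝ) → (Fin n → (Fin d → ℝ)) → ℝ)
    (hDd01 : ∀ y Y, Dd y Y ∈ Set.Icc (0 : ℝ) 1)
    (hlin : ∀ (A : (Fin d → ℝ) ≃ₗ[ℝ] (Fin d → ℝ)) (y : Fin d → ℝ)
      (Y : Fin n → (Fin d → ℝ)), Dd (A y) (fun i => A (Y i)) = Dd y Y)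
    (GD : (J → (Fin d → ℝ)) → (Fin n → J → (Fin d → ℝ)) → ℝ)
    (hGD : ∀ z x, GD z x = sInf {v : ℝ | ∃ t ∈ T, v = Dd (z t) (fun i => x i t)})
    (a : J → (Fin d → ℝ)) (ha : ∀ t ∈ T, ∀ j, a t j ≠ 0)
    (z : J → (Fin d → ℝ)) (x : Fin n → J → (Fin d → ℝ)) :
    GD (fun t j => a t j * z t j) (fun i t j => a t j * x i t j) = GD z x := by
  have hA : ∀ t ∈ T, IsUnit (Algebra.lmul ℝ (Fin d → ℝ) (a t)) := fun t ht =>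
    (Pi.isUnit_iff.2 fun j => (ha t ht j).isUnit).map _
  rw [hGD, hGD]
  exact congrArg sInf (graph_depth_FD2F_general hlin hA z x)
end

section
/- (Proposition 4, postulate FD2R for the location-slope depth.) Suppose D² is linear invariant: D²(A y | A x¹, …, A xⁿ) = D²(y | x¹, …, xⁿ) for every invertible linear map A : ℝ² → ℝ² and every cloud in ℝ². Let ρ : ℝ → ℝ be differentiable with ρ'(t) ≠ 0 for all t ∈ T, and suppose ρ maps T bijectively onto T. Then the location-slope depth is rearrangement invariant: LSD(z ∘ ρ | x¹ ∘ ρ, …, xⁿ ∘ ρ) = LSD(z | x¹, …, xⁿ), where (u ∘ ρ)'(t) = u'(ρ(t))ρ'(t) by the chain rule. -/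
section LocationSlope

variable {𝕜 E ι α : Type*} [NontriviallyNormedField 𝕜] [NormedAddCommGroup E] [NormedSpace 𝕜 E]

/-- The location-slope pair `(u(t), u'(t))` of a curve `u` at the parameter `t`. As `deriv` is `0`
where `u` is not differentiable, the second entry is the slope only where `u` is differentiable. -/
noncomputable def locationSlope (u : 𝕜 → E) (t : 𝕜) : E × E :=
  (u t, deriv u t)

/-- The depth of the location-slope pair of `z` at the parameter `t` within the cloud of the
location-slope pairs of the curves `x i`. The location-slope depth is its infimum over `t`. -/
noncomputable def locationSlopeDepthAt (D : E × E → (ι → E × E) → α) (z : 𝕜 → E) (x : ι → 𝕜 → E)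
    (t : 𝕜) : α :=
  D (locationSlope z t) (fun i => locationSlope (x i) t)

/-- The linear automorphism `(a, b) ↦ (a, c • b)` of location-slope pairs: the effect on them of a
change of parameter with derivative `c`. -/
def slopeScaling (c : 𝕜ˣ) : (E × E) ≃ₗ[𝕜] (E × E) :=
  (LinearEquiv.refl 𝕜 E).prodCongr (LinearEquiv.smulOfUnit c)

theorem locationSlope_comp {u : 𝕜 → E} {ρ : 𝕜 → 𝕜} {t : 𝕜} (hu : DifferentiableAt 𝕜 u (ρ t))
    (hρ : DifferentiableAt 𝕜 ρ t) (hρ' : deriv ρ t ≠ 0) :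
    locationSlope (u ∘ ρ) t =
      slopeScaling (Units.mk0 (deriv ρ t) hρ') (locationSlope u (ρ t)) :=
  Prod.ext rfl (deriv.scomp t hu hρ)

theorem locationSlopeDepthAt_comp {D : E × E → (ι → E × E) → α}
    (hD : ∀ (c : 𝕜ˣ) (y : E × E) (Y : ι → E × E),
      D (slopeScaling c y) (fun i => slopeScaling c (Y i)) = D y Y)
    {z : 𝕜 → E} {x : ι → 𝕜 → E} {ρ : 𝕜 → 𝕜} {t : 𝕜}
    (hz : DifferentiableAt 𝕜 z (ρ t)) (hx : ∀ i, DifferentiableAt 𝕜 (x i) (ρ t))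
    (hρ : DifferentiableAt 𝕜 ρ t) (hρ' : deriv ρ t ≠ 0) :
    locationSlopeDepthAt D (z ∘ ρ) (fun i => x i ∘ ρ) t = locationSlopeDepthAt D z x (ρ t) := by
  simp only [locationSlopeDepthAt, locationSlope_comp hz hρ hρ',
    fun i => locationSlope_comp (hx i) hρ hρ', hD]

/-- The conclusion compares the sets of pointwise depths rather than their infima because the real
`sInf` is a junk value on sets that are empty or unbounded below. -/
theorem location_slope_depth_FD2R_general {D : E × E → (ι → E × E) → α}
    (hD : ∀ (c : 𝕜ˣ) (y : E × E) (Y : ι → E × E),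
      D (slopeScaling c y) (fun i => slopeScaling c (Y i)) = D y Y)
    {S T : Set 𝕜} {z : 𝕜 → E} {x : ι → 𝕜 → E} {ρ : 𝕜 → 𝕜}
    (hz : ∀ s ∈ S, DifferentiableAt 𝕜 z s) (hx : ∀ i, ∀ s ∈ S, DifferentiableAt 𝕜 (x i) s)
    (hρ : ∀ t ∈ T, DifferentiableAt 𝕜 ρ t) (hρ' : ∀ t ∈ T, deriv ρ t ≠ 0) (hρT : ρ '' T = S) :
    {v | ∃ t ∈ T, v = locationSlopeDepthAt D (z ∘ ρ) (fun i => x i ∘ ρ) t} =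
      {v | ∃ s ∈ S, v = locationSlopeDepthAt D z x s} := by
  subst hρT
  have depthAt_comp : ∀ t ∈ T, locationSlopeDepthAt D (z ∘ ρ) (fun i => x i ∘ ρ) t =
      locationSlopeDepthAt D z x (ρ t) := fun t ht =>
    have hρt := Set.mem_image_of_mem ρ ht
    locationSlopeDepthAt_comp hD (hz _ hρt) (fun i => hx i _ hρt) (hρ t ht) (hρ' t ht)
  ext v
  simp only [Set.mem_ofPred_eq, Set.exists_mem_image]
  exact exists_congr fun t => and_congr_right fun ht => by rw [depthAt_comp t ht]

end LocationSlope

/-- Proposition 4, postulate FD2R: the location-slope depth is rearrangement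
invariant under differentiable bijective rearrangements with nonvanishing
derivative, whenever the underlying bivariate depth is linear invariant. -/
theorem location_slope_depth_FD2R
    {n : ℕ} (hn : 0 < n) (T : Set ℝ) (hT : T.Nonempty)
    (D2 : (ℝ × ℝ) → (Fin n → ℝ × ℝ) → ℝ)
    (hD201 : ∀ y Y, D2 y Y ∈ Set.Icc (0 : ℝ) 1)
    (hlin : ∀ (A : (ℝ × ℝ) ≃ₗ[ℝ] (ℝ × ℝ)) (y : ℝ × ℝ) (Y : Fin n → ℝ × ℝ),
      D2 (A y) (fun i => A (Y i)) = D2 y Y)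
    (LSD : (ℝ → ℝ) → (Fin n → ℝ → ℝ) → ℝ)
    (hLSD : ∀ z x, LSD z x = sInf {v : ℝ | ∃ t ∈ T,
      v = D2 (z t, deriv z t) (fun i => (x i t, deriv (x i) t))})
    (z : ℝ → ℝ) (hz : Differentiable ℝ z)
    (x : Fin n → ℝ → ℝ) (hx : ∀ i, Differentiable ℝ (x i))
    (ρ : ℝ → ℝ) (hρ : Differentiable ℝ ρ)
    (hρ' : ∀ t ∈ T, deriv ρ t ≠ 0) (hρT : Set.BijOn ρ T T) :
    LSD (z ∘ ρ) (fun i => x i ∘ ρ) = LSD z x := by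
  rw [hLSD, hLSD]
  exact congrArg sInf (location_slope_depth_FD2R_general (fun c => hlin (slopeScaling c))
    (fun s _ => hz s) (fun i s _ => hx i s) (fun t _ => hρ t) hρ' hρT.image_eq)
end

section
/- (Tukey functional depth vanishes outside the convex hull of the data.) Let E be a real normed vector space, x¹, …, xⁿ ∈ E, and let z ∈ E not lie in the convex hull of {x¹, …, xⁿ}. Then TD(z | x¹, …, xⁿ) = 0, where TD is the Tukey functional depth obtained by taking the infimum of the univariate halfspace depths over all continuous linear functionals. (The proof uses that the convex hull of finitely many points is compact, so z can be strictly separated from it by a continuous linear functional, whose corresponding univariate halfspace depth of φ(z) is 0.) -/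
/-- The univariate halfspace (Tukey) depth of ζ with respect to ξ₁, …, ξₙ. -/
noncomputable def tukeyDepth1 {n : ℕ} (ζ : ℝ) (ξ : Fin n → ℝ) : ℝ :=
  (min ((Finset.univ.filter fun i => ξ i ≤ ζ).card)
      ((Finset.univ.filter fun i => ζ ≤ ξ i).card) : ℝ) / n

theorem tukeyDepth1_nonneg {n : ℕ} (ζ : ℝ) (ξ : Fin n → ℝ) : 0 ≤ tukeyDepth1 ζ ξ := by
  unfold tukeyDepth1
  positivity

theorem tukeyDepth1_eq_zero_of_forall_lt {n : ℕ} {ζ : ℝ} {ξ : Fin n → ℝ}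
    (h : ∀ i, ζ < ξ i) : tukeyDepth1 ζ ξ = 0 := by
  have no_data_le : (Finset.univ.filter fun i => ξ i ≤ ζ) = ∅ :=
    Finset.filter_eq_empty_iff.2 fun i _ => (h i).not_ge
  simp [tukeyDepth1, no_data_le]

section LocallyConvex

variable {E : Type*} [AddCommGroup E] [Module ℝ E] [TopologicalSpace E] [IsTopologicalAddGroup E]
  [ContinuousSMul ℝ E] [LocallyConvexSpace ℝ E] [T2Space E]

theorem exists_forall_mem_lt_of_notMem_convexHull {s : Set E} (hs : s.Finite) {z : E}
    (hz : z ∉ convexHull ℝ s) : ∃ φ : E →L[ℝ] ℝ, ∀ y ∈ s, φ z < φ y := by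
  obtain ⟨φ, u, hzu, hu⟩ := geometric_hahn_banach_point_closed (convex_convexHull ℝ s)
    (hs.isClosed_convexHull ℝ) hz
  exact ⟨φ, fun y hy => hzu.trans (hu y (subset_convexHull ℝ s hy))⟩

theorem tukey_functional_depth_vanishes_general {n : ℕ} (_hn : 0 < n) (x : Fin n → E) (z : E)
    (hz : z ∉ convexHull ℝ (Set.range x)) :
    IsLeast {v : ℝ | ∃ φ : E →L[ℝ] ℝ, v = tukeyDepth1 (φ z) (fun i => φ (x i))} 0 := by
  constructor
  · obtain ⟨φ, hφ⟩ := exists_forall_mem_lt_of_notMem_convexHull (Set.finite_range x) hz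
    exact ⟨φ, (tukeyDepth1_eq_zero_of_forall_lt fun i => hφ (x i) (Set.mem_range_self i)).symm⟩
  · rintro _ ⟨φ, rfl⟩
    exact tukeyDepth1_nonneg _ _

end LocallyConvex

/-- The Tukey functional depth vanishes outside the convex hull of the data. -/
theorem tukey_functional_depth_vanishes
    {E : Type*} [NormedAddCommGroup E] [NormedSpace ℝ E]
    {n : ℕ} (hn : 0 < n) (x : Fin n → E) (z : E)
    (hz : z ∉ convexHull ℝ (Set.range x)) :
    sInf {v : ℝ | ∃ φ : E →L[ℝ] ℝ, v = tukeyDepth1 (φ z) (fun i => φ (x i))} = 0 :=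
  (tukey_functional_depth_vanishes_general hn x z hz).csInf_eq
end
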